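/- Let f : ℝ^d → ℝ be L-smooth, let μ > 0, and let f_μ be its Gaussian smoothing. Then for every x ∈ ℝ^d, |f_μ(x) − f(x)| ≤ L d μ² / 2. -/

import Mathlib

open MeasureTheory ProbabilityTheory

/-- The standard multivariate Gaussian distribution `N(0, I_d)` on `ℝ^d`. -/
noncomputable def stdGaussian (d : ℕ) : Measure (EuclideanSpace ℝ (Fin d)) :=
  (Measure.pi fun _ : Fin d => gaussianReal 0 1).map
    (MeasurableEquiv.toLp 2 (Fin d → ℝ))

/-- Quadratic Taylor bound for a function with Lipschitz gradient. -/
lemma abs_sub_sub_inner_gradient_le {E : Type*} [NormedAddCommGroup E] [InnerProductSpace ℝ E]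
    [CompleteSpace E] {f : E → ℝ} {L : ℝ} (hdiff : Differentiable ℝ f)
    (hlip : ∀ x y, ‖gradient f x - gradient f y‖ ≤ L * ‖x - y‖) (x v : E) :
    |f (x + v) - f x - inner ℝ (gradient f x) v| ≤ L / 2 * ‖v‖ ^ 2 := by
  have hg (t : ℝ) : HasDerivAt (fun t : ℝ => f (x + t • v) - f x - t * inner ℝ (gradient f x) v)
      (inner ℝ (gradient f (x + t • v) - gradient f x) v) t := by
    have hline : HasDerivAt (fun t : ℝ => x + t • v) v t := by
      simpa using ((hasDerivAt_id t).smul_const v).const_add x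
    have hcomp := (hdiff (x + t • v)).hasGradientAt.hasFDerivAt.comp_hasDerivAt t hline
    have hlin := (hasDerivAt_id t).mul_const (inner ℝ (gradient f x) v)
    simpa [inner_sub_left] using (hcomp.sub_const (f x)).fun_sub hlin
  have hB (t : ℝ) : HasDerivAt (fun t : ℝ => L / 2 * ‖v‖ ^ 2 * t ^ 2) (L * ‖v‖ ^ 2 * t) t := by
    refine ((hasDerivAt_pow 2 t).const_mul (L / 2 * ‖v‖ ^ 2)).congr_deriv ?_
    push_cast
    ring
  have hbound := image_norm_le_of_norm_deriv_right_le_deriv_boundary (a := 0) (b := 1)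
    (fun t _ => (hg t).continuousAt.continuousWithinAt) (fun t _ => (hg t).hasDerivWithinAt)
    (by simp) hB (fun t ht => ?_) (Set.right_mem_Icc.2 zero_le_one)
  · simpa using hbound
  · calc ‖inner ℝ (gradient f (x + t • v) - gradient f x) v‖
        ≤ ‖gradient f (x + t • v) - gradient f x‖ * ‖v‖ := norm_inner_le_norm _ _
      _ ≤ L * ‖x + t • v - x‖ * ‖v‖ := by gcongr; exact hlip _ _
      _ = L * ‖v‖ ^ 2 * t := by
        rw [add_sub_cancel_left, norm_smul, Real.norm_of_nonneg ht.1]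
        ring

/-- The coordinate definition of the standard Gaussian agrees with Mathlib's. -/
lemma stdGaussian_eq (d : ℕ) :
    _root_.stdGaussian d = ProbabilityTheory.stdGaussian (EuclideanSpace ℝ (Fin d)) :=
  map_pi_eq_stdGaussian

/-- The second moment of the standard Gaussian on `ℝ^d` is `d`. -/
lemma integral_norm_sq_stdGaussian (d : ℕ) :
    ∫ u, ‖u‖ ^ 2 ∂(ProbabilityTheory.stdGaussian (EuclideanSpace ℝ (Fin d))) = d := by
  have hmem (i : Fin d) : MemLp (fun u : EuclideanSpace ℝ (Fin d) => u i) 2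
      (ProbabilityTheory.stdGaussian (EuclideanSpace ℝ (Fin d))) :=
    IsGaussian.memLp_dual _ (EuclideanSpace.proj i) 2 (by simp)
  have hcoord (i : Fin d) :
      ∫ u : EuclideanSpace ℝ (Fin d), u i ^ 2
        ∂(ProbabilityTheory.stdGaussian (EuclideanSpace ℝ (Fin d))) = 1 := by
    have hmean := integral_strongDual_stdGaussian (EuclideanSpace.proj (𝕜 := ℝ) i)
    have hvar := variance_eval_multivariateGaussian (μ := 0)
      (Matrix.PosSemidef.one (n := Fin d) (R := ℝ)) i
    rw [multivariateGaussian_zero_one, variance_of_integral_eq_zero (hmem i).aemeasurable hmean]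
      at hvar
    simpa using hvar
  simp_rw [EuclideanSpace.real_norm_sq_eq]
  rw [integral_finsetSum _ fun i _ => (hmem i).integrable_sq]
  simp [hcoord]

/-- The Gaussian smoothing `f_μ` of an `L`-smooth function `f` satisfies
`|f_μ(x) − f(x)| ≤ L d μ² / 2`. -/
theorem gaussian_smoothing_value_bound
    (d : ℕ) (L μ : ℝ) (hμ : 0 < μ)
    (f : EuclideanSpace ℝ (Fin d) → ℝ)
    (hdiff : Differentiable ℝ f)
    (hlip : ∀ x y, ‖gradient f x - gradient f y‖ ≤ L * ‖x - y‖)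
    (fμ : EuclideanSpace ℝ (Fin d) → ℝ)
    (hfμ : ∀ x, fμ x = ∫ u, f (x + μ • u) ∂(stdGaussian d))
    (x : EuclideanSpace ℝ (Fin d)) :
    |fμ x - f x| ≤ L * d * μ ^ 2 / 2 := by
  rw [hfμ, stdGaussian_eq]
  set γ := ProbabilityTheory.stdGaussian (EuclideanSpace ℝ (Fin d))
  have hlin : Integrable (fun u => inner ℝ (gradient f x) (μ • u)) γ := by
    simp_rw [inner_smul_right]
    exact (IsGaussian.integrable_dual γ (innerSL ℝ (gradient f x))).const_mul μ
  have hlin_zero : ∫ u, inner ℝ (gradient f x) (μ • u) ∂γ = 0 := by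
    simp_rw [inner_smul_right]
    rw [integral_const_mul]
    exact mul_eq_zero_of_right μ (integral_strongDual_stdGaussian (innerSL ℝ (gradient f x)))
  have hsq : Integrable (fun u => L / 2 * μ ^ 2 * ‖u‖ ^ 2) γ :=
    ((IsGaussian.memLp_id γ 2 (by simp)).integrable_norm_pow (by simp)).const_mul _
  have hbound (u : EuclideanSpace ℝ (Fin d)) :
      ‖f (x + μ • u) - f x - inner ℝ (gradient f x) (μ • u)‖ ≤ L / 2 * μ ^ 2 * ‖u‖ ^ 2 := by
    refine (abs_sub_sub_inner_gradient_le hdiff hlip x (μ • u)).trans_eq ?_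
    rw [norm_smul, Real.norm_of_nonneg hμ.le]
    ring
  have hcont : Continuous f := hdiff.continuous
  have hrem : Integrable (fun u => f (x + μ • u) - f x - inner ℝ (gradient f x) (μ • u)) γ :=
    hsq.mono' (by fun_prop) (.of_forall hbound)
  have hdecomp : ∫ u, f (x + μ • u) ∂γ - f x =
      ∫ u, (f (x + μ • u) - f x - inner ℝ (gradient f x) (μ • u)) ∂γ := by
    have hf : Integrable (fun u => f (x + μ • u)) γ := by
      refine ((hrem.add hlin).add (integrable_const (f x))).congr (.of_forall fun u => ?_)
      simp
    have hf_sub : Integrable (fun u => f (x + μ • u) - f x) γ := hf.sub (integrable_const _)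
    rw [integral_sub hf_sub hlin, integral_sub hf (integrable_const _), hlin_zero]
    simp
  calc |∫ u, f (x + μ • u) ∂γ - f x|
      = ‖∫ u, (f (x + μ • u) - f x - inner ℝ (gradient f x) (μ • u)) ∂γ‖ := by
        rw [hdecomp, Real.norm_eq_abs]
    _ ≤ ∫ u, L / 2 * μ ^ 2 * ‖u‖ ^ 2 ∂γ :=
        norm_integral_le_of_norm_le hsq (.of_forall hbound)
    _ = L * d * μ ^ 2 / 2 := by
        rw [integral_const_mul, integral_norm_sq_stdGaussian]
        ring
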